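/- Let n be a square-free positive integer. Then Q*(√-n) is stable under the Hecke group action: for every z ∈ Q*(√-n), both -1/(2z) and -1/(2(z+1)) again belong to Q*(√-n) (in particular z ≠ 0 and z ≠ -1, since every element of Q*(√-n) has nonzero imaginary part). -/

import Mathlib

open Complex

/-- The set `Q*(√-n)` of complex numbers `(a + √n·i)/c` with `a, c ∈ ℤ`,
`c` even and nonzero, and `c ∣ a² + n`. -/
def Qstar (n : ℕ) : Set ℂ :=
  {z | ∃ a c : ℤ, c ≠ 0 ∧ 2 ∣ c ∧ c ∣ (a ^ 2 + (n : ℤ)) ∧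
    z = ((a : ℂ) + Real.sqrt n * Complex.I) / (c : ℂ)}

/-- The Hecke transformation `x(z) = -1/(2z)`. -/
noncomputable def heckeX (z : ℂ) : ℂ := -1 / (2 * z)

/-- The Hecke transformation `y(z) = -1/(2(z+1))`. -/
noncomputable def heckeY (z : ℂ) : ℂ := -1 / (2 * (z + 1))

/-- One step of the Hecke group action. -/
noncomputable def heckeStep (z w : ℂ) : Prop := w = heckeX z ∨ w = heckeY z

/-- Two elements lie in the same orbit if they are related by the equivalence
relation on `Q*(√-n)` generated by `z ~ x(z)` and `z ~ y(z)`. -/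
def sameOrbit (n : ℕ) (z w : ℂ) : Prop :=
  Relation.EqvGen (fun u v => u ∈ Qstar n ∧ v ∈ Qstar n ∧ heckeStep u v) z w

/-- The quadruplet `Q_α = {α, y(α), y²(α), y³(α)}`. -/
noncomputable def quad (α : ℂ) : Set ℂ :=
  {α, heckeY α, heckeY (heckeY α), heckeY (heckeY (heckeY α))}

/-- The orbit relation on the subtype `Q*(√-n)`. -/
def orbitRel (n : ℕ) (u v : {z : ℂ // z ∈ Qstar n}) : Prop :=
  sameOrbit n u.1 v.1

/-- `E_i(n)`: the number of positive even integers `C` dividing `i² + n`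
with `2(i²+n)/C + C ≤ 3i`. -/
def Efun (i n : ℕ) : ℕ :=
  ((i ^ 2 + n).divisors.filter (fun C => 2 ∣ C ∧ 2 * (i ^ 2 + n) / C + C ≤ 3 * i)).card

/-!
If `c * b = a ^ 2 + n`, then rationalising the denominator gives
`-1 / (2 * ((a + √n i) / c)) = (-a + √n i) / (2 * b)`, whose denominator `2 * b` is even and divides
`a ^ 2 + n` because `c` is even. Since `heckeY` is the translation `z ↦ z + 1` followed by
`heckeX`, and translations preserve `c`, both maps are covered.
-/

theorem neg_one_div_two_mul_add_div {K : Type*} [Field K] {a s b c : K} (hb : b ≠ 0) (hc : c ≠ 0)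
    (h : a ^ 2 - s ^ 2 = c * b) : -1 / (2 * ((a + s) / c)) = (-a + s) / (2 * b) := by
  have hfactor : (a + s) * (a - s) = c * b := by rw [← h]; ring
  have has : a + s ≠ 0 := left_ne_zero_of_mul (hfactor ▸ mul_ne_zero hc hb)
  have hinv : -1 / ((a + s) / c) = (-a + s) / b := by
    field_simp
    linear_combination h
  calc -1 / (2 * ((a + s) / c)) = -1 / ((a + s) / c) / 2 := by rw [div_div, mul_comm]
    _ = (-a + s) / (2 * b) := by rw [hinv, div_div, mul_comm]

theorem ofReal_sqrt_mul_I_sq {x : ℝ} (hx : 0 ≤ x) : ((√x : ℂ) * I) ^ 2 = -x := by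
  rw [mul_pow, I_sq, ← ofReal_pow, Real.sq_sqrt hx, mul_neg_one]

theorem heckeY_eq_heckeX_add_one (z : ℂ) : heckeY z = heckeX (z + 1) := rfl

namespace Qstar

variable {n : ℕ} {z : ℂ}

theorem im_ne_zero (hn : 0 < n) (hz : z ∈ Qstar n) : z.im ≠ 0 := by
  obtain ⟨a, c, hc, -, -, rfl⟩ := hz
  have him : (((a : ℂ) + √(n : ℝ) * I) / c).im = √(n : ℝ) / c := by
    simp [div_intCast_im]
  rw [him]
  exact div_ne_zero (Real.sqrt_ne_zero'.2 (Nat.cast_pos.2 hn)) (Int.cast_ne_zero.2 hc)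

theorem add_intCast_mem (hz : z ∈ Qstar n) (m : ℤ) : z + m ∈ Qstar n := by
  obtain ⟨a, c, hc, hc_even, ⟨b, hb⟩, rfl⟩ := hz
  have hcC : (c : ℂ) ≠ 0 := Int.cast_ne_zero.2 hc
  refine ⟨a + m * c, c, hc, hc_even, ⟨b + 2 * a * m + m ^ 2 * c, by linear_combination hb⟩, ?_⟩
  rw [div_add' _ _ _ hcC]
  push_cast
  ring

theorem heckeX_mem (hn : 0 < n) (hz : z ∈ Qstar n) : heckeX z ∈ Qstar n := by
  obtain ⟨a, c, hc, ⟨k, hk⟩, ⟨b, hb⟩, rfl⟩ := hz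
  have hb0 : b ≠ 0 := by
    have hpos : 0 < a ^ 2 + (n : ℤ) := by positivity
    exact right_ne_zero_of_mul (hb ▸ hpos.ne')
  have hnorm : (a : ℂ) ^ 2 - (√(n : ℝ) * I) ^ 2 = c * b := by
    rw [ofReal_sqrt_mul_I_sq n.cast_nonneg, sub_neg_eq_add]
    exact_mod_cast hb
  refine ⟨-a, 2 * b, mul_ne_zero two_ne_zero hb0, dvd_mul_right 2 b, ⟨k, ?_⟩, ?_⟩
  · rw [neg_sq, hb, hk]
    ring
  · push_cast
    exact neg_one_div_two_mul_add_div (Int.cast_ne_zero.2 hb0) (Int.cast_ne_zero.2 hc) hnorm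

theorem heckeY_mem (hn : 0 < n) (hz : z ∈ Qstar n) : heckeY z ∈ Qstar n := by
  rw [heckeY_eq_heckeX_add_one]
  exact heckeX_mem hn (by exact_mod_cast add_intCast_mem hz 1)

end Qstar

theorem stmt2_general (n : ℕ) (hn : 0 < n) :
    ∀ z ∈ Qstar n, z ≠ 0 ∧ z ≠ -1 ∧ heckeX z ∈ Qstar n ∧ heckeY z ∈ Qstar n := by
  intro z hz
  have him : z.im ≠ 0 := Qstar.im_ne_zero hn hz
  refine ⟨?_, ?_, Qstar.heckeX_mem hn hz, Qstar.heckeY_mem hn hz⟩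
  · rintro rfl
    exact him zero_im
  · rintro rfl
    exact him (by simp)

theorem stmt2 (n : ℕ) (hn : 0 < n) (hsf : Squarefree n) :
    ∀ z ∈ Qstar n, z ≠ 0 ∧ z ≠ -1 ∧ heckeX z ∈ Qstar n ∧ heckeY z ∈ Qstar n :=
  stmt2_general n hn
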